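/- Let G be a finite simple graph on vertex set {v_1,…,v_n} in which every vertex has even degree, let ε assign a sign ε_e ∈ {+1, −1} to each edge e of G, and define the generalized graph polynomial Q(x) = ∏_{e=(i,j)∈E}(x_i + ε_e x_j) ∈ ℝ[x_1,…,x_n]. Suppose Q has a nonzero almost central coefficient: there is ξ with [x^ξ]Q ≠ 0 and |ξ_i − deg_G(v_i)/2| ≤ 1 for all i. Then for every integer k ≥ 1, the polynomial ∏_{i=1}^{2k} Q(x^i) · ∏_{i=1}^{2k} ∏_{j=1}^n (x^i_j − x^{i+1}_j) in the 2kn variables x^i_j (with x^{2k+1} ≡ x^1) has nonzero central coefficient: the coefficient of ∏_{i=1}^{2k} ∏_{j=1}^n (x^i_j)^{deg_G(v_j)/2 + 1} is nonzero. -/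

import Mathlib

/-!
Expand each factor `x^i_v - x^{i+1}_v`, and let `S_i` be the set of vertices for which the second
term is chosen. The central coefficient becomes a signed sum over closed walks of vertex sets,
namely `tr ((D A)^{2k})` with `D = diag ((-1)^|S|)`, where `A S T` is the coefficient of `Q` at
`deg / 2 + 1_T - 1_S`. As `Q` is homogeneous, `A S T` vanishes unless `|S| = |T|`, so `D` commutes
with `A` and, since `D² = 1`, the signs cancel.

Each factor `x_i + ε x_j` satisfies `f(x) = ε x_i x_j f(x⁻¹)`. Multiplying over the edges gives
`Q(x) = σ x^deg Q(x⁻¹)` with `σ = ∏ ε_e`, which says that `A = σ Aᴴ`. Hence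
`tr (A^{2k}) = σ^k tr (A^k (A^k)ᴴ)`, a unit multiple of the squared Frobenius norm of `A^k`.
The almost central coefficients of `Q` are entries of `A`, so `A ≠ 0`; and `A^k = 0` would descend
to `A = 0`, because `A^{2m} = σ^m A^m (A^m)ᴴ = 0` forces `A^m = 0`.
-/

open MvPolynomial Finset

/-- An orientation of a simple graph: a finite set of ordered pairs containing,
for each edge `{u, v}` of `G`, exactly one of `(u, v)` and `(v, u)`. -/
structure GraphOrientation {V : Type*} (G : SimpleGraph V) where
  edges : Finset (V × V)
  adj_of_mem : ∀ e ∈ edges, G.Adj e.1 e.2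
  mem_iff_not_swap_mem : ∀ u v : V, G.Adj u v → ((u, v) ∈ edges ↔ (v, u) ∉ edges)

/-- The graph polynomial `∏_{(i,j) ∈ E} (x_j - x_i)` associated to an orientation. -/
noncomputable def graphPoly {V : Type*} {G : SimpleGraph V} (D : GraphOrientation G) :
    MvPolynomial V ℝ :=
  ∏ e ∈ D.edges, (X e.2 - X e.1)

/-- The outdegree of a vertex in an orientation. -/
def GraphOrientation.outDeg {V : Type*} [DecidableEq V] {G : SimpleGraph V}
    (D : GraphOrientation G) (v : V) : ℕ :=
  (D.edges.filter fun e => e.1 = v).card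

/-- `G` is `f`-choosable: any assignment of lists of real colors with `|A_v| ≥ f v`
admits a proper coloring from the lists. -/
def Choosable {V : Type*} (G : SimpleGraph V) (f : V → ℕ) : Prop :=
  ∀ A : V → Finset ℝ, (∀ v, f v ≤ (A v).card) →
    ∃ c : V → ℝ, (∀ v, c v ∈ A v) ∧ ∀ u v : V, G.Adj u v → c u ≠ c v

/-- The list chromatic number. -/
noncomputable def chNumber {V : Type*} (G : SimpleGraph V) : ℕ :=
  sInf {m | Choosable G fun _ => m}

/-- The Alon–Tarsi number: the least `k` such that the graph polynomial has a
monomial `x^d` with nonzero coefficient and `max_v d_v = k - 1`. -/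
noncomputable def ATNumber {V : Type*} (G : SimpleGraph V) : ℕ :=
  sInf {k | ∃ (D : GraphOrientation G) (d : V →₀ ℕ),
    MvPolynomial.coeff d (graphPoly D) ≠ 0 ∧ d.support.sup d + 1 = k}

instance {α β : Type*} {G : SimpleGraph α} {H : SimpleGraph β}
    [DecidableEq α] [DecidableEq β] [DecidableRel G.Adj] [DecidableRel H.Adj] :
    DecidableRel (G.boxProd H).Adj :=
  fun _ _ => decidable_of_iff _ SimpleGraph.boxProd_adj.symm

section TracePow

variable {n R : Type*} [Fintype n] [DecidableEq n]

lemma trace_pow_mul_eq_sum_prod [CommSemiring R] (A B : Matrix n n R) (m : ℕ) :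
    (A ^ m * B).trace =
      ∑ p : Fin (m + 1) → n,
        (∏ i : Fin m, A (p i.castSucc) (p i.succ)) * B (p (Fin.last m)) (p 0) := by
  induction m generalizing B with
  | zero =>
    rw [← (Equiv.funUnique (Fin 1) n).symm.sum_comp]
    simp [Matrix.trace]
  | succ m ih =>
    rw [pow_succ', mul_assoc, Matrix.trace_mul_comm, mul_assoc, ih,
      ← (Fin.consEquiv fun _ : Fin (m + 2) => n).sum_comp, Fintype.sum_prod_type, sum_comm]
    refine sum_congr rfl fun q _ => ?_
    rw [Matrix.mul_apply, mul_sum]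
    refine sum_congr rfl fun a _ => ?_
    simp only [Fin.consEquiv_apply, Fin.prod_univ_succ, Fin.castSucc_zero, Fin.cons_zero,
      Fin.cons_succ, ← Fin.succ_castSucc, ← Fin.succ_last]
    ring

lemma trace_pow_eq_sum_prod [CommSemiring R] (A : Matrix n n R) (N : ℕ) [NeZero N] :
    (A ^ N).trace = ∑ p : Fin N → n, ∏ i, A (p i) (p (i + 1)) := by
  obtain ⟨m, rfl⟩ := Nat.exists_eq_succ_of_ne_zero (NeZero.ne N)
  simp only [pow_succ, trace_pow_mul_eq_sum_prod, Fin.prod_univ_castSucc, Fin.coeSucc_eq_succ,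
    Fin.last_add_one]

open Matrix

lemma pow_two_mul_eq_smul_of_eq_smul_conjTranspose [CommSemiring R] [StarRing R]
    {A : Matrix n n R} {σ : R} (hA : A = σ • Aᴴ) (k : ℕ) :
    A ^ (2 * k) = σ ^ k • (A ^ k * (A ^ k)ᴴ) :=
  calc A ^ (2 * k) = A ^ k * (σ • Aᴴ) ^ k := by rw [← hA, two_mul, pow_add]
    _ = σ ^ k • (A ^ k * (A ^ k)ᴴ) := by rw [smul_pow, mul_smul_comm, conjTranspose_pow]

variable [CommRing R] [PartialOrder R] [StarRing R] [StarOrderedRing R] [NoZeroDivisors R]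
  {A : Matrix n n R} {σ : R}

lemma pow_ne_zero_of_eq_smul_conjTranspose (hA : A = σ • Aᴴ) (h0 : A ≠ 0) (k : ℕ) :
    A ^ k ≠ 0 := by
  have hσ : σ ≠ 0 := left_ne_zero_of_smul (hA.symm.trans_ne h0)
  induction k with
  | zero => exact fun h => h0 (by rw [← mul_one A, ← pow_zero A, h, mul_zero])
  | succ k ih =>
    intro h
    obtain rfl | hk := k.eq_zero_or_pos
    · exact h0 (by simpa using h)
    have hzero : σ ^ k • (A ^ k * (A ^ k)ᴴ) = 0 := by
      rw [← pow_two_mul_eq_smul_of_eq_smul_conjTranspose hA]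
      exact pow_eq_zero_of_le (by lia) h
    exact ih (self_mul_conjTranspose_eq_zero.1
      ((smul_eq_zero_iff_right (pow_ne_zero k hσ)).1 hzero))

lemma trace_pow_ne_zero_of_eq_smul_conjTranspose (hA : A = σ • Aᴴ) (h0 : A ≠ 0) {N : ℕ}
    (hN : Even N) : (A ^ N).trace ≠ 0 := by
  obtain ⟨k, rfl⟩ := hN.exists_two_nsmul
  have hσ : σ ≠ 0 := left_ne_zero_of_smul (hA.symm.trans_ne h0)
  rw [smul_eq_mul, pow_two_mul_eq_smul_of_eq_smul_conjTranspose hA, trace_smul, smul_eq_mul]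
  exact mul_ne_zero (pow_ne_zero k hσ) (trace_mul_conjTranspose_self_eq_zero_iff.not.2
    (pow_ne_zero_of_eq_smul_conjTranspose hA h0 k))

end TracePow

lemma sum_mapDomain_prodMk {I V M : Type*} [Fintype I] [AddCommMonoid M] (p : I → V →₀ M) :
    ∑ i, (p i).mapDomain (Prod.mk i) = (Finsupp.equivFunOnFinite.symm p).uncurry := by
  classical
  ext ⟨j, v⟩
  rw [Finsupp.finsetSum_apply, Finset.sum_eq_single j]
  · simp [Finsupp.mapDomain_apply (Prod.mk_right_injective j)]
  · rintro i - hij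
    exact Finsupp.mapDomain_of_notMem_range _ _ fun ⟨w, hw⟩ => hij (congrArg Prod.fst hw)
  · simp

lemma coeff_prod_rename_prodMk {I V R : Type*} [Fintype I] [CommSemiring R]
    (F : I → MvPolynomial V R) (m : I × V →₀ ℕ) :
    coeff m (∏ i, rename (Prod.mk i) (F i)) = ∏ i, coeff (m.curry i) (F i) := by
  classical
  have expand (i : I) : rename (Prod.mk i) (F i) =
      ∑ u ∈ (F i).support, monomial (u.mapDomain (Prod.mk i)) (coeff u (F i)) := by
    conv_lhs => rw [(F i).as_sum, map_sum]
    simp only [rename_monomial]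
  have eq_iff (p : I → V →₀ ℕ) : ∑ i, (p i).mapDomain (Prod.mk i) = m ↔ p = m.curry := by
    rw [sum_mapDomain_prodMk]
    exact (Equiv.symm_apply_eq Finsupp.curryEquiv).trans
      (Equiv.symm_apply_eq Finsupp.equivFunOnFinite)
  simp_rw [expand, prod_univ_sum, coeff_sum, ← monomial_sum_prod, coeff_monomial, eq_iff,
    sum_ite_eq']
  split_ifs with h
  · rfl
  · simp only [Fintype.mem_piFinset, not_forall, notMem_support_iff] at h
    obtain ⟨i, hi⟩ := h
    exact (prod_eq_zero (mem_univ i) hi).symm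

section Support

variable {V R : Type*} [CommSemiring R] {d₁ d₂ : V →₀ ℕ} {P₁ P₂ : MvPolynomial V R}

lemma le_add_of_mem_support_mul (h₁ : ∀ ξ ∈ P₁.support, ξ ≤ d₁) (h₂ : ∀ ξ ∈ P₂.support, ξ ≤ d₂)
    {ξ : V →₀ ℕ} (hξ : ξ ∈ (P₁ * P₂).support) : ξ ≤ d₁ + d₂ := by
  classical
  obtain ⟨a, ha, b, hb, rfl⟩ := mem_add.1 (support_mul _ _ hξ)
  exact add_le_add (h₁ a ha) (h₂ b hb)

lemma coeff_mul_eq_sum_antidiagonal_filter_le [DecidableEq V] (h₁ : ∀ ξ ∈ P₁.support, ξ ≤ d₁)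
    (h₂ : ∀ ξ ∈ P₂.support, ξ ≤ d₂) (ξ : V →₀ ℕ) :
    coeff ξ (P₁ * P₂) =
      ∑ x ∈ antidiagonal ξ with x.1 ≤ d₁ ∧ x.2 ≤ d₂, coeff x.1 P₁ * coeff x.2 P₂ := by
  rw [coeff_mul, sum_filter_of_ne]
  intro x _ hx
  exact ⟨h₁ _ (mem_support_iff.2 (left_ne_zero_of_mul hx)),
    h₂ _ (mem_support_iff.2 (right_ne_zero_of_mul hx))⟩

end Support

/-- The conjugate-reciprocal relation `P = σ x ^ d Q̄(x⁻¹)`, where `Q̄` has the conjugate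
coefficients. It is stated coefficientwise; the two support bounds say that no exponent exceeds
`d`, so that both sides are polynomials and the relation is multiplicative. -/
structure IsConjReciprocal {V R : Type*} [CommSemiring R] [StarRing R] (σ : R) (d : V →₀ ℕ)
    (P Q : MvPolynomial V R) : Prop where
  coeff_eq : ∀ ξ η, ξ + η = d → coeff ξ P = σ * star (coeff η Q)
  le_of_mem_support_left : ∀ ξ ∈ P.support, ξ ≤ d
  le_of_mem_support_right : ∀ ξ ∈ Q.support, ξ ≤ d

namespace IsConjReciprocal

open Finsupp (single)

variable {V R : Type*} [CommSemiring R] [StarRing R] {σ σ₁ σ₂ : R} {d d₁ d₂ : V →₀ ℕ}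
  {P P₁ P₂ Q Q₁ Q₂ : MvPolynomial V R}

protected lemma monomial {u v : V →₀ ℕ} (huv : u + v = d) {r s : R} (hrs : r = σ * star s) :
    IsConjReciprocal σ d (monomial u r) (monomial v s) where
  coeff_eq ξ η hξη := by
    classical
    have h_iff : u = ξ ↔ v = η := by
      constructor <;> rintro rfl
      · exact add_left_cancel (huv.trans hξη.symm)
      · exact add_right_cancel (huv.trans hξη.symm)
    simp only [coeff_monomial, h_iff]
    split_ifs <;> simp [hrs]
  le_of_mem_support_left ξ hξ := by
    rw [mem_singleton.1 (support_monomial_subset hξ), ← huv]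
    exact le_self_add
  le_of_mem_support_right ξ hξ := by
    rw [mem_singleton.1 (support_monomial_subset hξ), ← huv]
    exact le_add_self

protected lemma add (h₁ : IsConjReciprocal σ d P₁ Q₁) (h₂ : IsConjReciprocal σ d P₂ Q₂) :
    IsConjReciprocal σ d (P₁ + P₂) (Q₁ + Q₂) where
  coeff_eq ξ η hξη := by
    simp only [coeff_add, h₁.coeff_eq ξ η hξη, h₂.coeff_eq ξ η hξη, star_add, mul_add]
  le_of_mem_support_left ξ hξ := by
    classical
    exact (mem_union.1 (support_add hξ)).elim (h₁.le_of_mem_support_left ξ)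
      (h₂.le_of_mem_support_left ξ)
  le_of_mem_support_right ξ hξ := by
    classical
    exact (mem_union.1 (support_add hξ)).elim (h₁.le_of_mem_support_right ξ)
      (h₂.le_of_mem_support_right ξ)

protected lemma mul (h₁ : IsConjReciprocal σ₁ d₁ P₁ Q₁) (h₂ : IsConjReciprocal σ₂ d₂ P₂ Q₂) :
    IsConjReciprocal (σ₁ * σ₂) (d₁ + d₂) (P₁ * P₂) (Q₁ * Q₂) where
  coeff_eq ξ η hξη := by
    classical
    have h_maps {ξ η : V →₀ ℕ} (hξη : ξ + η = d₁ + d₂) (x : (V →₀ ℕ) × (V →₀ ℕ))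
        (hx : x ∈ {x ∈ antidiagonal ξ | x.1 ≤ d₁ ∧ x.2 ≤ d₂}) :
        (d₁ - x.1, d₂ - x.2) ∈ {x ∈ antidiagonal η | x.1 ≤ d₁ ∧ x.2 ≤ d₂} := by
      simp only [mem_filter, HasAntidiagonal.mem_antidiagonal] at hx ⊢
      obtain ⟨rfl, hx₁, hx₂⟩ := hx
      refine ⟨add_left_cancel (a := x.1 + x.2) ?_, tsub_le_self, tsub_le_self⟩
      rw [hξη, add_add_add_comm, add_tsub_cancel_of_le hx₁, add_tsub_cancel_of_le hx₂]
    have h_invol {ζ : V →₀ ℕ} (x : (V →₀ ℕ) × (V →₀ ℕ))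
        (hx : x ∈ {x ∈ antidiagonal ζ | x.1 ≤ d₁ ∧ x.2 ≤ d₂}) :
        (d₁ - (d₁ - x.1), d₂ - (d₂ - x.2)) = x := by
      obtain ⟨-, hx₁, hx₂⟩ := mem_filter.1 hx
      rw [tsub_tsub_cancel_of_le hx₁, tsub_tsub_cancel_of_le hx₂]
    rw [coeff_mul_eq_sum_antidiagonal_filter_le h₁.le_of_mem_support_left h₂.le_of_mem_support_left,
      coeff_mul_eq_sum_antidiagonal_filter_le h₁.le_of_mem_support_right h₂.le_of_mem_support_right,
      star_sum, mul_sum]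
    refine sum_nbij' (fun x => (d₁ - x.1, d₂ - x.2)) (fun x => (d₁ - x.1, d₂ - x.2))
      (h_maps hξη) (h_maps (by rw [add_comm, hξη])) h_invol h_invol fun x hx => ?_
    obtain ⟨-, hx₁, hx₂⟩ := mem_filter.1 hx
    rw [h₁.coeff_eq _ _ (add_tsub_cancel_of_le hx₁), h₂.coeff_eq _ _ (add_tsub_cancel_of_le hx₂),
      star_mul', mul_mul_mul_comm]
  le_of_mem_support_left _ :=
    le_add_of_mem_support_mul h₁.le_of_mem_support_left h₂.le_of_mem_support_left
  le_of_mem_support_right _ :=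
    le_add_of_mem_support_mul h₁.le_of_mem_support_right h₂.le_of_mem_support_right

protected lemma prod {ι : Type*} {E : Finset ι} {σ : ι → R} {d : ι → V →₀ ℕ}
    {P Q : ι → MvPolynomial V R} (h : ∀ e ∈ E, IsConjReciprocal (σ e) (d e) (P e) (Q e)) :
    IsConjReciprocal (∏ e ∈ E, σ e) (∑ e ∈ E, d e) (∏ e ∈ E, P e) (∏ e ∈ E, Q e) := by
  classical
  induction E using Finset.induction with
  | empty => exact .monomial (zero_add 0) (by simp)
  | insert e E he ih =>
    simp only [prod_insert he, sum_insert he]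
    exact (h e (mem_insert_self e E)).mul (ih fun f hf => h f (mem_insert_of_mem hf))

lemma degree_eq_add {m n : ℕ} (h : IsConjReciprocal σ d P Q) (hP : P.IsHomogeneous m)
    (hQ : Q.IsHomogeneous n) (h0 : P ≠ 0) : d.degree = m + n := by
  obtain ⟨ξ, hξ⟩ := ne_zero_iff.1 h0
  have hd : ξ + (d - ξ) = d :=
    add_tsub_cancel_of_le (h.le_of_mem_support_left ξ (mem_support_iff.2 hξ))
  have hη : coeff (d - ξ) Q ≠ 0 := fun hη => hξ (by rw [h.coeff_eq _ _ hd, hη, star_zero, mul_zero])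
  rw [← hd, map_add, not_imp_comm.1 hP.coeff_eq_zero hξ, not_imp_comm.1 hQ.coeff_eq_zero hη]

lemma X_add_C_mul_X {ε : R} (hε : ε * star ε = 1) (a b : V) :
    IsConjReciprocal ε (single a 1 + single b 1) (X a + C ε * X b) (X a + C ε * X b) := by
  have h := (IsConjReciprocal.monomial rfl hε.symm).add
    (.monomial (add_comm (single b 1) (single a 1)) (by simp : ε = ε * star 1))
  rw [add_comm (monomial _ ε)] at h
  rwa [C_mul_X_eq_monomial]

lemma prod_X_compl [Fintype V] [DecidableEq V] (S : Finset V) :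
    IsConjReciprocal (1 : R) (∑ v, single v 1) (∏ v ∈ S, X v) (∏ v ∈ Sᶜ, X v) := by
  simp only [X, ← monomial_sum_one]
  exact .monomial (sum_add_sum_compl S _) (by simp)

end IsConjReciprocal

section Transfer

open Finsupp (single)

variable {V R : Type*} [Fintype V]

section TransferMatrix

variable [DecidableEq V] [CommSemiring R]

/-- The transfer matrix on sets of vertices, with `(S, T)` entry the coefficient of `Q` at
`h - 1_S - 1_{Tᶜ}`. That exponent may be negative somewhere, so the squarefree monomials of `S`
and `Tᶜ` are multiplied into `Q` instead of being subtracted from `h`. -/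
noncomputable def transferMatrix (Q : MvPolynomial V R) (h : V →₀ ℕ) :
    Matrix (Finset V) (Finset V) R :=
  .of fun S T => coeff h (Q * ((∏ v ∈ S, X v) * ∏ v ∈ Tᶜ, X v))

open Matrix in
lemma transferMatrix_eq_smul_conjTranspose [StarRing R]
    {Q : MvPolynomial V R} {h d : V →₀ ℕ} {σ : R} (hQ : IsConjReciprocal σ d Q Q)
    (hd : ∀ v, d v + 2 = 2 * h v) : transferMatrix Q h = σ • (transferMatrix Q h)ᴴ := by
  ext S T
  have hST := hQ.mul ((IsConjReciprocal.prod_X_compl S).mul (.prod_X_compl (compl T)))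
  rw [mul_one, mul_one, compl_compl, mul_comm (∏ v ∈ Sᶜ, X v)] at hST
  refine hST.coeff_eq h h (Finsupp.ext fun v => ?_)
  have := hd v
  simp only [Finsupp.add_apply, Finsupp.finsetSum_apply, Finsupp.single_apply, sum_ite_eq',
    mem_univ, if_true]
  lia

lemma card_eq_of_transferMatrix_ne_zero {Q : MvPolynomial V R} {h : V →₀ ℕ} {n : ℕ}
    (hQ : Q.IsHomogeneous n) (hn : h.degree = n + Fintype.card V) {S T : Finset V}
    (hST : transferMatrix Q h S T ≠ 0) : #S = #T := by
  have hX (S : Finset V) : (∏ v ∈ S, X v : MvPolynomial V R).IsHomogeneous #S := by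
    simpa using IsHomogeneous.prod S X (fun _ => 1) fun v _ => isHomogeneous_X R v
  have hdeg : h.degree = n + (#S + #Tᶜ) :=
    not_imp_comm.1 (hQ.mul ((hX S).mul (hX Tᶜ))).coeff_eq_zero hST
  have := card_add_card_compl T
  lia

lemma transferMatrix_ne_zero {Q : MvPolynomial V R} {h ξ : V →₀ ℕ}
    (hQ : coeff ξ Q ≠ 0) (hξ : ∀ v, ξ v ≤ h v ∧ h v ≤ ξ v + 2) : transferMatrix Q h ≠ 0 := by
  let S : Finset V := {v | ξ v + 2 = h v}
  let T : Finset V := {v | ξ v = h v}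
  have hST : ξ + (∑ v ∈ S, single v 1 + ∑ v ∈ Tᶜ, single v 1) = h := by
    ext v
    have := hξ v
    simp only [Finsupp.add_apply, Finsupp.finsetSum_apply, Finsupp.single_apply, sum_ite_eq',
      S, T, mem_compl, mem_filter_univ]
    split_ifs <;> lia
  intro h0
  apply hQ
  have h_entry : transferMatrix Q h S T = 0 := by rw [h0, Matrix.zero_apply]
  simpa only [transferMatrix, Matrix.of_apply, X, ← monomial_sum_one, monomial_mul, mul_one, ← hST,
    coeff_mul_monomial] using h_entry

lemma commute_diagonal_transferMatrix {Q : MvPolynomial V R} {h : V →₀ ℕ} {n : ℕ}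
    (hQ : Q.IsHomogeneous n) (hn : h.degree = n + Fintype.card V) (f : ℕ → R) :
    Commute (Matrix.diagonal fun S : Finset V => f #S) (transferMatrix Q h) := by
  ext S T
  rw [Matrix.diagonal_mul, Matrix.mul_diagonal, mul_comm]
  by_cases hST : transferMatrix Q h S T = 0
  · rw [hST, zero_mul, zero_mul]
  · rw [card_eq_of_transferMatrix_ne_zero hQ hn hST]

end TransferMatrix

variable [CommRing R]

lemma prod_X_sub_X_eq_sum [DecidableEq V] {I : Type*} (i j : I) :
    ∏ v : V, (X (i, v) - X (j, v) : MvPolynomial (I × V) R) =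
      ∑ S : Finset V, C ((-1) ^ #S) *
        (rename (Prod.mk j) (∏ v ∈ S, X v) * rename (Prod.mk i) (∏ v ∈ Sᶜ, X v)) := by
  rw [prod_sub, powerset_univ]
  refine sum_congr rfl fun S _ => ?_
  simp only [map_prod, rename_X, map_pow, map_neg, C_1, ← compl_eq_univ_sdiff]
  ring

/-- The product of `N` copies of `Q` in disjoint layers of variables, cyclically joined by a factor
for each vertex and each pair of consecutive layers. The variable `x_v` of layer `i` is
`X (i, v)`. -/
noncomputable def cyclicProduct (Q : MvPolynomial V R) (N : ℕ) [NeZero N] :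
    MvPolynomial (Fin N × V) R :=
  (∏ i : Fin N, rename (Prod.mk i) Q) * ∏ i : Fin N, ∏ v : V, (X (i, v) - X (i + 1, v))

lemma coeff_cyclicProduct_eq_trace [DecidableEq V] (Q : MvPolynomial V R) (h : V →₀ ℕ) (N : ℕ)
    [NeZero N] :
    coeff (Finsupp.equivFunOnFinite.symm fun p : Fin N × V => h p.2) (cyclicProduct Q N) =
      ((Matrix.diagonal (fun S : Finset V => (-1) ^ #S) * transferMatrix Q h) ^ N).trace := by
  -- the variables that `p i` picks from layer `i + 1` are moved to the factor of that layer
  have group (p : Fin N → Finset V) : (∏ i, rename (Prod.mk i) Q) *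
      ∏ i, (C ((-1) ^ #(p i)) * (rename (Prod.mk (i + 1)) (∏ v ∈ p i, X v) *
        rename (Prod.mk i) (∏ v ∈ (p i)ᶜ, X v))) =
      C (∏ i, (-1) ^ #(p i)) * ∏ i, rename (Prod.mk i)
        (Q * ((∏ v ∈ p (i - 1), X v) * ∏ v ∈ (p i)ᶜ, X v)) := by
    have shift : ∏ i, rename (Prod.mk (i + 1)) (∏ v ∈ p i, X v : MvPolynomial V R) =
        ∏ i, rename (Prod.mk i) (∏ v ∈ p (i - 1), X v) := by
      rw [← Equiv.prod_comp (Equiv.addRight 1) fun i => rename (Prod.mk i) (∏ v ∈ p (i - 1), X v)]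
      simp only [Equiv.coe_addRight, add_sub_cancel_right]
    simp only [map_mul, prod_mul_distrib, shift, map_prod C]
    ring
  simp_rw [cyclicProduct, prod_X_sub_X_eq_sum, Fintype.prod_sum, mul_sum, group, coeff_sum,
    coeff_C_mul, coeff_prod_rename_prodMk, trace_pow_eq_sum_prod, Matrix.diagonal_mul,
    prod_mul_distrib]
  refine sum_congr rfl fun p _ => congrArg _ ?_
  rw [← Equiv.prod_comp (Equiv.addRight 1)]
  simp only [Equiv.coe_addRight, add_sub_cancel_right]
  exact prod_congr rfl fun i _ => congrArg (coeff · _) (Finsupp.ext fun v => rfl)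

lemma coeff_cyclicProduct_ne_zero [PartialOrder R] [StarRing R] [StarOrderedRing R]
    [NoZeroDivisors R] {Q : MvPolynomial V R} {σ : R} {d h ξ : V →₀ ℕ} {n : ℕ}
    (hσ : IsConjReciprocal σ d Q Q) (hn : Q.IsHomogeneous n) (hd : ∀ v, d v + 2 = 2 * h v)
    (hQ : coeff ξ Q ≠ 0) (hξ : ∀ v, ξ v ≤ h v ∧ h v ≤ ξ v + 2)
    {N : ℕ} [NeZero N] (hN : Even N) :
    coeff (Finsupp.equivFunOnFinite.symm fun p : Fin N × V => h p.2) (cyclicProduct Q N) ≠ 0 := by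
  classical
  have hdeg : h.degree = n + Fintype.card V := by
    have h_double : ∑ v, (d v + 2) = ∑ v, 2 * h v := sum_congr rfl fun v _ => hd v
    rw [sum_add_distrib, ← mul_sum, ← Finsupp.degree_eq_sum, ← Finsupp.degree_eq_sum,
      hσ.degree_eq_add hn hn (ne_zero_iff.2 ⟨ξ, hQ⟩), sum_const, card_univ,
      smul_eq_mul] at h_double
    lia
  have signs_cancel : (fun S : Finset V => (-1 : R) ^ #S) ^ N = 1 := by
    ext S
    rw [Pi.pow_apply, pow_right_comm, hN.neg_one_pow, one_pow, Pi.one_apply]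
  rw [coeff_cyclicProduct_eq_trace, (commute_diagonal_transferMatrix hn hdeg ((-1) ^ ·)).mul_pow,
    Matrix.diagonal_pow, signs_cancel, Matrix.diagonal_one', one_mul]
  exact trace_pow_ne_zero_of_eq_smul_conjTranspose (transferMatrix_eq_smul_conjTranspose hσ hd)
    (transferMatrix_ne_zero hQ hξ) hN

end Transfer

/-- The degrees of the vertices in the multigraph with edge set `E` and endpoint maps `s` and `t`,
as an exponent vector. A loop contributes two to the degree of its vertex. -/
noncomputable def incidenceDegree {V ι : Type*} (E : Finset ι) (s t : ι → V) : V →₀ ℕ :=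
  ∑ e ∈ E, (Finsupp.single (s e) 1 + Finsupp.single (t e) 1)

theorem stmt13_general {R V ι : Type*} [CommRing R] [PartialOrder R] [StarRing R]
    [StarOrderedRing R] [NoZeroDivisors R] [Fintype V] (E : Finset ι) (s t : ι → V)
    (hEven : ∀ v, Even (incidenceDegree E s t v)) (ε : ι → R)
    (hε : ∀ e ∈ E, ε e * star (ε e) = 1) (ξ : V →₀ ℕ)
    (hne : coeff ξ (∏ e ∈ E, (X (s e) + C (ε e) * X (t e))) ≠ 0)
    (hac : ∀ v, |2 * (ξ v : ℤ) - incidenceDegree E s t v| ≤ 2)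
    (N : ℕ) [NeZero N] (hN : Even N) :
    coeff (Finsupp.equivFunOnFinite.symm fun p : Fin N × V => incidenceDegree E s t p.2 / 2 + 1)
      ((∏ i : Fin N, rename (Prod.mk i) (∏ e ∈ E, (X (s e) + C (ε e) * X (t e)))) *
        ∏ i : Fin N, ∏ v : V, (X (i, v) - X (i + 1, v))) ≠ 0 := by
  classical
  have h_homog : (∏ e ∈ E, (X (s e) + C (ε e) * X (t e))).IsHomogeneous (∑ _ ∈ E, 1) :=
    .prod _ _ _ fun e _ => (isHomogeneous_X R _).add (isHomogeneous_C_mul_X _ _)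
  refine coeff_cyclicProduct_ne_zero
    (h := Finsupp.equivFunOnFinite.symm fun v => incidenceDegree E s t v / 2 + 1)
    (.prod fun e he => .X_add_C_mul_X (hε e he) (s e) (t e)) h_homog
    (fun v => ?_) hne (fun v => ?_) hN
  · change incidenceDegree E s t v + 2 = 2 * (incidenceDegree E s t v / 2 + 1)
    rw [mul_add, Nat.two_mul_div_two_of_even (hEven v)]
  · have := abs_le.1 (hac v)
    have := Nat.two_mul_div_two_of_even (hEven v)
    rw [Finsupp.equivFunOnFinite_symm_apply_apply]
    lia

lemma GraphOrientation.ite_mem_add_ite_swap_mem {V : Type*} [DecidableEq V]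
    {G : SimpleGraph V} [DecidableRel G.Adj] (D : GraphOrientation G) (v w : V) :
    ((if (v, w) ∈ D.edges then 1 else 0) + if (w, v) ∈ D.edges then 1 else 0) =
      if G.Adj v w then 1 else 0 := by
  by_cases hvw : G.Adj v w
  · by_cases h : (v, w) ∈ D.edges <;> simp_all [D.mem_iff_not_swap_mem v w hvw]
  · have h₁ : (v, w) ∉ D.edges := fun h => hvw (D.adj_of_mem _ h)
    have h₂ : (w, v) ∉ D.edges := fun h => hvw (D.adj_of_mem _ h).symm
    simp [hvw, h₁, h₂]

lemma GraphOrientation.incidenceDegree_eq_degree {V : Type*} [Fintype V] {G : SimpleGraph V}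
    [DecidableRel G.Adj] (D : GraphOrientation G) (v : V) :
    incidenceDegree D.edges Prod.fst Prod.snd v = G.degree v := by
  classical
  calc
    incidenceDegree D.edges Prod.fst Prod.snd v
      = ∑ x, ∑ y, if (x, y) ∈ D.edges then
          (if x = v then 1 else 0) + (if y = v then 1 else 0) else 0 := by
        rw [← Fintype.sum_prod_type', ← sum_filter]
        simp [incidenceDegree, Finsupp.single_apply]
    _ = ∑ w, ((if (v, w) ∈ D.edges then 1 else 0) + if (w, v) ∈ D.edges then 1 else 0) := by
        simp only [ite_add_zero, sum_add_distrib]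
        rw [sum_comm]
        simp only [← ite_and, and_comm (a := (_, _) ∈ D.edges)]
        simp only [ite_and, sum_ite_eq', mem_univ, if_true]
    _ = G.degree v := by
        simp only [D.ite_mem_add_ite_swap_mem]
        rw [← card_filter, ← G.card_neighborFinset_eq_degree, G.neighborFinset_eq_filter]

/-- Let `G` have all degrees even, let `ε` assign a sign `±1` to
each (oriented) edge, and let `Q = ∏_{(i,j) ∈ E} (x_i + ε_e x_j)` be the resulting
generalized graph polynomial. If `Q` has a nonzero almost central coefficient, then
for every `k ≥ 1` the polynomial `∏_{i=1}^{2k} Q(x^i) · ∏_{i=1}^{2k} ∏_j (x^i_j - x^{i+1}_j)`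
(with `x^{2k+1} ≡ x^1`) has a nonzero central coefficient: the coefficient of
`∏_{i,j} (x^i_j)^{deg(v_j)/2 + 1}` is nonzero. -/
theorem stmt13 {V : Type*} [Fintype V] [DecidableEq V] (G : SimpleGraph V)
    [DecidableRel G.Adj]
    (hEven : ∀ v, Even (G.degree v))
    (D : GraphOrientation G) (ε : V × V → ℝ)
    (hε : ∀ e ∈ D.edges, ε e = 1 ∨ ε e = -1)
    (ξ : V →₀ ℕ)
    (hne : MvPolynomial.coeff ξ
      (∏ e ∈ D.edges, (X e.1 + C (ε e) * X e.2) : MvPolynomial V ℝ) ≠ 0)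
    (hac : ∀ v, |2 * (ξ v : ℤ) - (G.degree v : ℤ)| ≤ 2)
    (k : ℕ) (hk : 1 ≤ k) [NeZero (2 * k)] :
    MvPolynomial.coeff
      (Finsupp.equivFunOnFinite.symm
        fun p : Fin (2 * k) × V => G.degree p.2 / 2 + 1)
      ((∏ i : Fin (2 * k),
          (∏ e ∈ D.edges, (X e.1 + C (ε e) * X e.2) : MvPolynomial V ℝ).rename
            fun v => (i, v)) *
        ∏ i : Fin (2 * k), ∏ v : V, (X (i, v) - X (i + 1, v))) ≠ 0 := by
  simp only [← D.incidenceDegree_eq_degree] at hEven hac ⊢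
  exact stmt13_general D.edges Prod.fst Prod.snd hEven ε
    (fun e he => by rcases hε e he with h | h <;> simp [h]) ξ hne hac (2 * k) (even_two_mul k)
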